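/- Let M ∈ ℝ^{3×3} be symmetric positive definite with Tr(M) = 3, let M̄ := Tr(M)·I₃ − M, and let λ̲ > 0 be the minimum eigenvalue of M̄. Then for every R ∈ SO(3) with Tr(R) ≠ −1, one has (2/λ̲) · ‖vex(P_a(M R))‖² / (1 + Tr(M⁻¹ M R)) ≥ ‖M R‖_I, where Tr(M⁻¹ M R) = Tr(R). -/

import Mathlib

/-!
Put `s = 1 + Tr R`, `u = vex(P_a(R))`, `N = Tr(M) I - M` and `y = N u`. Cayley–Hamilton for a
rotation gives Rodrigues' formula `s R = s I + s [u]× + 2 [u]×²`. Multiplying it by the symmetric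
matrix `M` and taking the trace and the skew part yields
`s Tr(M (I - R)) = 2 uᵀ y` and `s vex(P_a(M R)) = (s/2) y - u × y`. The two terms of the latter are
orthogonal, so `4 ‖vex(P_a(M R))‖² ≥ ‖y‖²`, and it remains to see that `‖y‖² ≥ λ uᵀ y`. This follows
from `‖y - λ u‖² ≥ 0` and the Rayleigh bound `uᵀ y ≥ λ ‖u‖²`.
-/

open Matrix

noncomputable section

/-- The skew-symmetric matrix `[x]×` associated to `x ∈ ℝ³`. -/
def skew (x : Fin 3 → ℝ) : Matrix (Fin 3) (Fin 3) ℝ :=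
  !![0, -x 2, x 1; x 2, 0, -x 0; -x 1, x 0, 0]

/-- The anti-symmetric projection `P_a(A) = (A - Aᵀ)/2`. -/
def Pa (A : Matrix (Fin 3) (Fin 3) ℝ) : Matrix (Fin 3) (Fin 3) ℝ :=
  (1/2 : ℝ) • (A - Aᵀ)

/-- `vex(P_a(A)) = (1/2)(A₃₂−A₂₃, A₁₃−A₃₁, A₂₁−A₁₂)`. -/
def vexPa (A : Matrix (Fin 3) (Fin 3) ℝ) : Fin 3 → ℝ :=
  ![(1/2) * (A 2 1 - A 1 2), (1/2) * (A 0 2 - A 2 0), (1/2) * (A 1 0 - A 0 1)]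

/-- Normalized Euclidean distance `‖A‖_I = (1/4)Tr(I₃ − A)`. -/
def normI (A : Matrix (Fin 3) (Fin 3) ℝ) : ℝ :=
  (1/4) * (1 - A).trace

section Spectral

variable {n : Type*} [Fintype n] [DecidableEq n]

open scoped ComplexOrder MatrixOrder Matrix.Norms.L2Operator in
lemma posSemidef_sub_algebraMap_of_le_eigenvalues {𝕜 : Type*} [RCLike 𝕜]
    {A : Matrix n n 𝕜} (hA : A.IsHermitian) {c : ℝ} (hc : ∀ i, c ≤ hA.eigenvalues i) :
    (A - algebraMap ℝ (Matrix n n 𝕜) c).PosSemidef := by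
  rw [← Matrix.le_iff, algebraMap_le_iff_le_spectrum hA.isSelfAdjoint,
    hA.spectrum_real_eq_range_eigenvalues]
  exact Set.forall_mem_range.2 hc

lemma mul_dotProduct_self_le_of_le_eigenvalues {A : Matrix n n ℝ}
    (hA : A.IsHermitian) {c : ℝ} (hc : ∀ i, c ≤ hA.eigenvalues i) (x : n → ℝ) :
    c * (x ⬝ᵥ x) ≤ x ⬝ᵥ A *ᵥ x := by
  have h := (posSemidef_sub_algebraMap_of_le_eigenvalues hA hc).dotProduct_mulVec_nonneg x
  rw [Algebra.algebraMap_eq_smul_one, star_trivial, sub_mulVec, smul_mulVec, one_mulVec,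
    dotProduct_sub, dotProduct_smul, smul_eq_mul] at h
  exact sub_nonneg.1 h

end Spectral

section DotProduct

variable {n α : Type*} [Fintype n] [LinearOrder α]

lemma dotProduct_self_nonneg [Ring α] [IsOrderedRing α] (x : n → α) : 0 ≤ x ⬝ᵥ x :=
  Finset.sum_nonneg fun i _ ↦ mul_self_nonneg (x i)

lemma mul_dotProduct_le_dotProduct_self [CommRing α] [IsStrictOrderedRing α] {c : α}
    (hc : 0 ≤ c) {x y : n → α} (h : c * (x ⬝ᵥ x) ≤ x ⬝ᵥ y) : c * (x ⬝ᵥ y) ≤ y ⬝ᵥ y := by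
  have hsq : 0 ≤ (y - c • x) ⬝ᵥ (y - c • x) := dotProduct_self_nonneg _
  simp only [sub_dotProduct, dotProduct_sub, smul_dotProduct, dotProduct_smul, smul_eq_mul,
    dotProduct_comm y x] at hsq
  linarith [mul_le_mul_of_nonneg_left h hc]

end DotProduct

section VexPa

variable (A B : Matrix (Fin 3) (Fin 3) ℝ) (c : ℝ) (u v : Fin 3 → ℝ)

lemma skew_vexPa : skew (vexPa A) = Pa A := by
  ext i j
  fin_cases i <;> fin_cases j <;> simp [skew, vexPa, Pa] <;> ring

lemma vexPa_add : vexPa (A + B) = vexPa A + vexPa B := by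
  ext i
  fin_cases i <;> simp [vexPa] <;> ring

lemma vexPa_smul : vexPa (c • A) = c • vexPa A := by
  ext i
  fin_cases i <;> simp [vexPa] <;> ring

lemma vexPa_sub : vexPa (A - B) = vexPa A - vexPa B := by
  ext i
  fin_cases i <;> simp [vexPa] <;> ring

lemma vexPa_vecMulVec : vexPa (vecMulVec u v) = (1 / 2 : ℝ) • v ⨯₃ u := by
  ext i
  fin_cases i <;> simp [vexPa, vecMulVec_apply, cross_apply] <;> ring

lemma vexPa_mul_skew :
    vexPa (A * skew u) = (1 / 2 : ℝ) • (A.trace • (1 : Matrix (Fin 3) (Fin 3) ℝ) - Aᵀ) *ᵥ u := by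
  ext i
  fin_cases i <;>
    simp [vexPa, skew, mul_apply, mulVec, dotProduct, trace_fin_three, Fin.sum_univ_three] <;> ring

lemma trace_mul_skew : (A * skew u).trace = -2 * (vexPa A ⬝ᵥ u) := by
  simp [vexPa, skew, mul_apply, dotProduct, trace_fin_three, Fin.sum_univ_three]
  ring

lemma skew_mul_skew_self : skew u * skew u = vecMulVec u u - (u ⬝ᵥ u) • 1 := by
  ext i j
  fin_cases i <;> fin_cases j <;>
    simp [skew, vecMulVec_apply, dotProduct, Fin.sum_univ_three] <;> ring

variable {A}

lemma vexPa_eq_zero_of_isSymm (hA : A.IsSymm) : vexPa A = 0 := by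
  simp [vexPa, hA.apply]

lemma trace_mul_skew_mul_skew_self :
    (A * (skew u * skew u)).trace =
      -(u ⬝ᵥ (A.trace • (1 : Matrix (Fin 3) (Fin 3) ℝ) - A) *ᵥ u) := by
  simp only [skew_mul_skew_self, mul_sub, mul_vecMulVec, Matrix.mul_smul, mul_one, trace_sub,
    trace_vecMulVec, trace_smul, sub_mulVec, smul_mulVec, one_mulVec, dotProduct_sub,
    dotProduct_smul, smul_eq_mul, dotProduct_comm u (A *ᵥ u)]
  ring

lemma vexPa_mul_skew_mul_skew_self (hA : A.IsSymm) :
    vexPa (A * (skew u * skew u)) =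
      -((1 / 2 : ℝ) • u ⨯₃ ((A.trace • (1 : Matrix (Fin 3) (Fin 3) ℝ) - A) *ᵥ u)) := by
  simp only [skew_mul_skew_self, mul_sub, mul_vecMulVec, Matrix.mul_smul, mul_one, vexPa_sub,
    vexPa_smul, vexPa_vecMulVec, vexPa_eq_zero_of_isSymm hA, sub_mulVec, smul_mulVec, one_mulVec,
    map_sub, map_smul, cross_self]
  module

end VexPa

section Rotation

lemma adjugate_eq_sq_sub_trace_smul_add {α : Type*} [CommRing α] (A : Matrix (Fin 3) (Fin 3) α) :
    A.adjugate = A ^ 2 - A.trace • A + A.adjugate.trace • 1 := by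
  rw [adjugate_fin_three, sq]
  ext i j
  fin_cases i <;> fin_cases j <;> simp [mul_apply, Fin.sum_univ_three, trace_fin_three] <;> ring

lemma adjugate_eq_transpose_of_mem_specialOrthogonalGroup {n α : Type*} [Fintype n]
    [DecidableEq n] [CommRing α] {A : Matrix n n α} (hA : A ∈ specialOrthogonalGroup n α) :
    A.adjugate = Aᵀ := by
  obtain ⟨hortho, hdet⟩ := mem_specialOrthogonalGroup_iff.1 hA
  calc A.adjugate = Aᵀ * A * A.adjugate := by
        rw [(mem_orthogonalGroup_iff' _ _).1 hortho, one_mul]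
    _ = Aᵀ := by rw [mul_assoc, mul_adjugate, hdet, one_smul, mul_one]

lemma sq_eq_of_mem_specialOrthogonalGroup {α : Type*} [CommRing α]
    {R : Matrix (Fin 3) (Fin 3) α} (hR : R ∈ specialOrthogonalGroup (Fin 3) α) :
    R ^ 2 = R.trace • R - R.trace • 1 + Rᵀ := by
  have h := adjugate_eq_sq_sub_trace_smul_add R
  rw [adjugate_eq_transpose_of_mem_specialOrthogonalGroup hR, trace_transpose] at h
  rw [h]
  abel

variable {M R : Matrix (Fin 3) (Fin 3) ℝ}

lemma rodrigues_formula (hR : R ∈ specialOrthogonalGroup (Fin 3) ℝ) :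
    (1 + R.trace) • R = (1 + R.trace) • (1 + skew (vexPa R)) +
      (2 : ℝ) • (skew (vexPa R) * skew (vexPa R)) := by
  obtain ⟨hortho, -⟩ := mem_specialOrthogonalGroup_iff.1 hR
  have hsq : R * R = R.trace • R - R.trace • 1 + Rᵀ := by
    rw [← sq, sq_eq_of_mem_specialOrthogonalGroup hR]
  have hsqT : Rᵀ * Rᵀ = R.trace • Rᵀ - R.trace • 1 + R := by
    simpa using congrArg transpose hsq
  have hPa : Pa R * Pa R = (1 / 4 : ℝ) • ((1 + R.trace) • (R + Rᵀ) - (2 * (1 + R.trace)) • 1) := by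
    simp only [Pa, smul_mul_smul_comm, sub_mul, mul_sub, hsq, hsqT,
      (mem_orthogonalGroup_iff _ _).1 hortho, (mem_orthogonalGroup_iff' _ _).1 hortho]
    module
  rw [skew_vexPa, hPa, Pa]
  module

lemma one_add_trace_smul_mul (hR : R ∈ specialOrthogonalGroup (Fin 3) ℝ) :
    (1 + R.trace) • (M * R) = (1 + R.trace) • M + (1 + R.trace) • (M * skew (vexPa R)) +
      (2 : ℝ) • (M * (skew (vexPa R) * skew (vexPa R))) := by
  rw [← Matrix.mul_smul, rodrigues_formula hR]
  simp only [mul_add, Matrix.mul_smul, mul_one, smul_add]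

lemma one_add_trace_mul_trace_mul_one_sub (hM : M.IsSymm)
    (hR : R ∈ specialOrthogonalGroup (Fin 3) ℝ) :
    (1 + R.trace) * (M * (1 - R)).trace =
      2 * (vexPa R ⬝ᵥ (M.trace • (1 : Matrix (Fin 3) (Fin 3) ℝ) - M) *ᵥ vexPa R) := by
  have h := congrArg trace (one_add_trace_smul_mul (M := M) hR)
  simp only [trace_add, trace_smul, smul_eq_mul, trace_mul_skew, vexPa_eq_zero_of_isSymm hM,
    zero_dotProduct, trace_mul_skew_mul_skew_self] at h
  rw [mul_sub, mul_one, trace_sub]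
  linarith

lemma one_add_trace_smul_vexPa_mul (hM : M.IsSymm) (hR : R ∈ specialOrthogonalGroup (Fin 3) ℝ)
    {y : Fin 3 → ℝ} (hy : y = (M.trace • (1 : Matrix (Fin 3) (Fin 3) ℝ) - M) *ᵥ vexPa R) :
    (1 + R.trace) • vexPa (M * R) = ((1 + R.trace) / 2) • y - vexPa R ⨯₃ y := by
  rw [← vexPa_smul, one_add_trace_smul_mul hR]
  simp only [vexPa_add, vexPa_smul, vexPa_eq_zero_of_isSymm hM, vexPa_mul_skew, hM.eq,
    vexPa_mul_skew_mul_skew_self _ hM, ← hy]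
  module

lemma one_add_trace_nonneg (hR : R ∈ specialOrthogonalGroup (Fin 3) ℝ) : 0 ≤ 1 + R.trace := by
  have h : (1 + R.trace) * (3 - R.trace) = 4 * (vexPa R ⬝ᵥ vexPa R) := by
    have := one_add_trace_mul_trace_mul_one_sub isSymm_one hR
    simp only [one_mul, trace_sub, trace_one, Fintype.card_fin, sub_mulVec, smul_mulVec,
      one_mulVec, dotProduct_sub, dotProduct_smul, smul_eq_mul] at this
    push_cast at this
    linarith
  -- A negative `1 + Tr R` would make `3 - Tr R` positive.
  nlinarith [dotProduct_self_nonneg (vexPa R)]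

lemma dotProduct_self_le_four_mul_vexPa_mul_dotProduct_self (hM : M.IsSymm)
    (hR : R ∈ specialOrthogonalGroup (Fin 3) ℝ) (htrR : R.trace ≠ -1)
    {y : Fin 3 → ℝ} (hy : y = (M.trace • (1 : Matrix (Fin 3) (Fin 3) ℝ) - M) *ᵥ vexPa R) :
    y ⬝ᵥ y ≤ 4 * (vexPa (M * R) ⬝ᵥ vexPa (M * R)) := by
  have hs : 1 + R.trace ≠ 0 := fun h ↦ htrR (by linarith)
  have horth : ((1 + R.trace) • vexPa (M * R)) ⬝ᵥ ((1 + R.trace) • vexPa (M * R)) =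
      ((1 + R.trace) / 2) ^ 2 * (y ⬝ᵥ y) + (vexPa R ⨯₃ y) ⬝ᵥ (vexPa R ⨯₃ y) := by
    simp only [one_add_trace_smul_vexPa_mul hM hR hy, sub_dotProduct, dotProduct_sub,
      smul_dotProduct, dotProduct_smul, smul_eq_mul, dotProduct_comm _ y, dot_cross_self]
    ring
  rw [smul_dotProduct, dotProduct_smul, smul_eq_mul, smul_eq_mul] at horth
  refine le_of_mul_le_mul_left ?_ (sq_pos_of_ne_zero hs)
  linarith [dotProduct_self_nonneg (vexPa R ⨯₃ y)]

end Rotation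

lemma normI_mul_of_trace_eq_three {M : Matrix (Fin 3) (Fin 3) ℝ} (hM : M.trace = 3)
    (R : Matrix (Fin 3) (Fin 3) ℝ) : normI (M * R) = (1 / 4) * (M * (1 - R)).trace := by
  simp [normI, mul_sub, hM]

theorem vexPa_sq_norm_MR_ineq_general {M R : Matrix (Fin 3) (Fin 3) ℝ} (hM : M.IsSymm) {lam : ℝ}
    (hlam : 0 < lam)
    (hN : ∀ x, lam * (x ⬝ᵥ x) ≤ x ⬝ᵥ (M.trace • (1 : Matrix (Fin 3) (Fin 3) ℝ) - M) *ᵥ x)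
    (hR : R ∈ specialOrthogonalGroup (Fin 3) ℝ) (htrR : R.trace ≠ -1) :
    (1 / 4) * (M * (1 - R)).trace ≤
      (2 / lam) * (vexPa (M * R) ⬝ᵥ vexPa (M * R)) / (1 + R.trace) := by
  have hs : 0 < 1 + R.trace :=
    (one_add_trace_nonneg hR).lt_of_ne' fun h ↦ htrR (by linarith)
  rw [le_div_iff₀ hs, div_mul_eq_mul_div 2 lam, le_div_iff₀ hlam]
  set y := (M.trace • (1 : Matrix (Fin 3) (Fin 3) ℝ) - M) *ᵥ vexPa R with hy
  calc 1 / 4 * (M * (1 - R)).trace * (1 + R.trace) * lam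
      = lam * (vexPa R ⬝ᵥ y) / 2 := by
        linear_combination lam / 4 * one_add_trace_mul_trace_mul_one_sub hM hR
    _ ≤ y ⬝ᵥ y / 2 := by gcongr; exact mul_dotProduct_le_dotProduct_self hlam.le (hN _)
    _ ≤ 4 * (vexPa (M * R) ⬝ᵥ vexPa (M * R)) / 2 := by
        gcongr; exact dotProduct_self_le_four_mul_vexPa_mul_dotProduct_self hM hR htrR hy
    _ = 2 * (vexPa (M * R) ⬝ᵥ vexPa (M * R)) := by ring

/-- Lemma 1, eq. (26): for `M` symmetric positive definite with
`Tr M = 3`, `M̄ = Tr(M)I − M`, `λ̲ > 0` the minimum eigenvalue of `M̄`, and every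
`R ∈ SO(3)` with `Tr R ≠ −1`, one has `Tr(M⁻¹MR) = Tr R` and
`(2/λ̲)·‖vex(P_a(MR))‖²/(1 + Tr(M⁻¹MR)) ≥ ‖MR‖_I`. -/
theorem vexPa_sq_norm_MR_ineq (M : Matrix (Fin 3) (Fin 3) ℝ)
    (hsymm : M.IsSymm) (hpd : M.PosDef) (htr : M.trace = 3)
    (hherm : (M.trace • (1 : Matrix (Fin 3) (Fin 3) ℝ) - M).IsHermitian)
    (lam : ℝ) (hlam : lam = ⨅ i, hherm.eigenvalues i) (hlampos : 0 < lam)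
    (R : Matrix (Fin 3) (Fin 3) ℝ)
    (hR : Rᵀ * R = 1) (hR' : R * Rᵀ = 1) (hdet : R.det = 1)
    (htrR : R.trace ≠ -1) :
    (M⁻¹ * (M * R)).trace = R.trace ∧
    (2 / lam) * (vexPa (M * R) ⬝ᵥ vexPa (M * R)) / (1 + (M⁻¹ * (M * R)).trace)
      ≥ normI (M * R) := by
  rw [nonsing_inv_mul_cancel_left M R hpd.det_pos.ne'.isUnit, normI_mul_of_trace_eq_three htr]
  have hSO : R ∈ specialOrthogonalGroup (Fin 3) ℝ :=
    mem_specialOrthogonalGroup_iff.2 ⟨(mem_orthogonalGroup_iff _ _).2 hR', hdet⟩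
  have hle (i) : lam ≤ hherm.eigenvalues i :=
    hlam ▸ ciInf_le (Set.finite_range _).bddBelow i
  exact ⟨rfl, vexPa_sq_norm_MR_ineq_general hsymm hlampos
    (mul_dotProduct_self_le_of_le_eigenvalues hherm hle) hSO htrR⟩
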